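/- Let $\alpha < \beta$ be real numbers and let $u : \mathbb{B}^2 \to (\alpha, \beta)$ be a real-valued harmonic function on the unit disk. Then for every $z \in \mathbb{B}^2$, $|\nabla u(z)| \leq \frac{2(\beta-\alpha)}{\pi} \cdot \frac{\cos\left( \frac{\pi}{\beta-\alpha}\left( u(z) - \frac{\alpha+\beta}{2} \right) \right)}{1 - |z|^2}$. -/

import Mathlib

open Metric Set

/-- A real-valued function `u` on a subset of `ℂ ≅ ℝ²` is harmonic if it is twice
continuously differentiable and satisfies the Laplace equation
`∂²u/∂x² + ∂²u/∂y² = 0`. -/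
def IsHarmonicOn (u : ℂ → ℝ) (G : Set ℂ) : Prop :=
  ContDiffOn ℝ 2 u G ∧ ∀ z ∈ G,
    iteratedFDeriv ℝ 2 u z ![1, 1] + iteratedFDeriv ℝ 2 u z ![Complex.I, Complex.I] = 0

/-!
On a disk `u` is the real part of a holomorphic `F`, and `|∇u| = |F'|`. After an affine change of
the target, `F` takes values in the strip `|Re w| < π / 2`, which `w ↦ exp (i w)` maps to the right
half-plane. There the Schwarz–Pick inequality (the Schwarz lemma conjugated by Möbius maps of the
disk and of the half-plane) bounds the derivative by the real part. The modulus of `exp (i F)`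
cancels from both sides, leaving the cosine of `Re F`.
-/

open scoped ComplexConjugate

section DiskShift

variable {R : ℝ} {a ζ : ℂ}

/-- The Möbius automorphism `ζ ↦ R² (ζ + a) / (R² + ā ζ)` of the disk of radius `R` about the origin
that carries `0` to `a`. It moves the Schwarz lemma from the centre of a disk to any other point. -/
noncomputable def diskShift (R : ℝ) (a ζ : ℂ) : ℂ :=
  R ^ 2 * (ζ + a) / (R ^ 2 + conj a * ζ)

lemma diskShift_zero (hR : R ≠ 0) (a : ℂ) : diskShift R a 0 = a := by
  simp [diskShift, hR]

lemma sq_norm_sq_add_conj_mul_sub (R : ℝ) (a ζ : ℂ) :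
    ‖R ^ 2 + conj a * ζ‖ ^ 2 - (R * ‖ζ + a‖) ^ 2 = (R ^ 2 - ‖a‖ ^ 2) * (R ^ 2 - ‖ζ‖ ^ 2) := by
  rw [mul_pow]
  simp only [← Complex.normSq_eq_norm_sq, Complex.normSq_apply, Complex.add_re, Complex.add_im,
    Complex.mul_re, Complex.mul_im, Complex.conj_re, Complex.conj_im, ← Complex.ofReal_pow,
    Complex.ofReal_re, Complex.ofReal_im]
  ring

lemma mul_norm_add_lt_norm_sq_add_conj_mul (ha : ‖a‖ < R) (hζ : ‖ζ‖ < R) :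
    R * ‖ζ + a‖ < ‖R ^ 2 + conj a * ζ‖ := by
  have ha_sq : ‖a‖ ^ 2 < R ^ 2 := by gcongr
  have hζ_sq : ‖ζ‖ ^ 2 < R ^ 2 := by gcongr
  refine lt_of_pow_lt_pow_left₀ 2 (norm_nonneg _) (sub_pos.1 ?_)
  rw [sq_norm_sq_add_conj_mul_sub]
  exact mul_pos (sub_pos.2 ha_sq) (sub_pos.2 hζ_sq)

lemma sq_add_conj_mul_ne_zero (ha : ‖a‖ < R) (hζ : ‖ζ‖ < R) : (R : ℂ) ^ 2 + conj a * ζ ≠ 0 := by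
  have hR : 0 < R := (norm_nonneg a).trans_lt ha
  exact norm_pos_iff.1 <|
    (by positivity : 0 ≤ R * ‖ζ + a‖).trans_lt (mul_norm_add_lt_norm_sq_add_conj_mul ha hζ)

lemma norm_diskShift_lt (ha : ‖a‖ < R) (hζ : ‖ζ‖ < R) : ‖diskShift R a ζ‖ < R := by
  have hR : 0 < R := (norm_nonneg a).trans_lt ha
  have hden : 0 < ‖R ^ 2 + conj a * ζ‖ := norm_pos_iff.2 (sq_add_conj_mul_ne_zero ha hζ)
  rw [diskShift, norm_div, norm_mul, norm_pow, Complex.norm_real, Real.norm_of_nonneg hR.le,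
    div_lt_iff₀ hden, sq, mul_assoc]
  exact mul_lt_mul_of_pos_left (mul_norm_add_lt_norm_sq_add_conj_mul ha hζ) hR

lemma differentiableAt_diskShift (ha : ‖a‖ < R) (hζ : ‖ζ‖ < R) :
    DifferentiableAt ℂ (diskShift R a) ζ :=
  DifferentiableAt.div (by fun_prop) (by fun_prop) (sq_add_conj_mul_ne_zero ha hζ)

lemma hasDerivAt_diskShift_zero (hR : R ≠ 0) (a : ℂ) :
    HasDerivAt (diskShift R a) ((R ^ 2 - ‖a‖ ^ 2) / R ^ 2 : ℝ) 0 := by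
  have hRC : (R : ℂ) ≠ 0 := Complex.ofReal_ne_zero.2 hR
  have hquot : HasDerivAt (diskShift R a) _ 0 :=
    (((hasDerivAt_id (0 : ℂ)).add_const a).const_mul ((R : ℂ) ^ 2)).div
      (((hasDerivAt_id (0 : ℂ)).const_mul (conj a)).const_add ((R : ℂ) ^ 2)) (by simpa using hR)
  refine hquot.congr_deriv ?_
  push_cast
  simp only [id, ← Complex.mul_conj', mul_zero, add_zero, zero_add, mul_one]
  field_simp

end DiskShift

section HalfPlane

variable {a w : ℂ}

/-- The Cayley transform `w ↦ (w - a) / (w + ā)`, which maps the right half-plane to the unit disk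
and carries `a` to `0`. -/
noncomputable def cayleyTransform (a w : ℂ) : ℂ :=
  (w - a) / (w + conj a)

lemma cayleyTransform_self (a : ℂ) : cayleyTransform a a = 0 := by
  simp [cayleyTransform]

lemma add_conj_ne_zero_of_re_pos (ha : 0 < a.re) (hw : 0 < w.re) : w + conj a ≠ 0 := fun h ↦ by
  have hre : w.re + a.re = 0 := by simpa using congrArg Complex.re h
  linarith

lemma sq_norm_add_conj_sub_sq_norm_sub (a w : ℂ) :
    ‖w + conj a‖ ^ 2 - ‖w - a‖ ^ 2 = 4 * a.re * w.re := by
  simp only [← Complex.normSq_eq_norm_sq, Complex.normSq_apply, Complex.add_re, Complex.add_im,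
    Complex.sub_re, Complex.sub_im, Complex.conj_re, Complex.conj_im]
  ring

lemma norm_cayleyTransform_lt_one (ha : 0 < a.re) (hw : 0 < w.re) :
    ‖cayleyTransform a w‖ < 1 := by
  rw [cayleyTransform, norm_div, div_lt_one (norm_pos_iff.2 (add_conj_ne_zero_of_re_pos ha hw))]
  refine lt_of_pow_lt_pow_left₀ 2 (norm_nonneg _) (sub_pos.1 ?_)
  rw [sq_norm_add_conj_sub_sq_norm_sub]
  positivity

lemma differentiableAt_cayleyTransform (ha : 0 < a.re) (hw : 0 < w.re) :
    DifferentiableAt ℂ (cayleyTransform a) w :=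
  DifferentiableAt.div (by fun_prop) (by fun_prop) (add_conj_ne_zero_of_re_pos ha hw)

lemma hasDerivAt_cayleyTransform_self (ha : a.re ≠ 0) :
    HasDerivAt (cayleyTransform a) ((2 * a.re)⁻¹ : ℝ) a := by
  have hden : a + conj a ≠ 0 := by simpa [Complex.add_conj] using ha
  have hquot : HasDerivAt (cayleyTransform a) _ a :=
    ((hasDerivAt_id a).sub_const a).div ((hasDerivAt_id a).add_const (conj a)) hden
  refine hquot.congr_deriv ?_
  rw [Complex.ofReal_inv, ← Complex.add_conj]
  simp only [id, sub_self, zero_mul, sub_zero, one_mul]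
  field_simp

end HalfPlane

section SchwarzPick

variable {R : ℝ} {c z : ℂ}

lemma norm_deriv_mul_le_of_mapsTo_closedBall {E : Type*} [NormedAddCommGroup E] [NormedSpace ℂ E]
    {f : ℂ → E} {r : ℝ} (hf : DifferentiableOn ℂ f (ball c R)) (hz : z ∈ ball c R)
    (hmaps : MapsTo f (ball c R) (closedBall (f z) r)) :
    ‖deriv f z‖ * (R ^ 2 - ‖z - c‖ ^ 2) ≤ R * r := by
  have hR : 0 < R := pos_of_mem_ball hz
  have ha : ‖z - c‖ < R := mem_ball_iff_norm.1 hz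
  have hsq : ‖z - c‖ ^ 2 < R ^ 2 := by gcongr
  let T : ℂ → ℂ := fun ζ ↦ c + diskShift R (z - c) ζ
  have hT_zero : T 0 = z := by simp [T, diskShift_zero hR.ne']
  have hT_maps : MapsTo T (ball 0 R) (ball c R) := fun ζ hζ ↦ by
    simpa [T] using norm_diskShift_lt ha (mem_ball_zero_iff.1 hζ)
  have hT_diff : DifferentiableOn ℂ T (ball 0 R) := fun ζ hζ ↦
    ((differentiableAt_diskShift ha (mem_ball_zero_iff.1 hζ)).const_add c).differentiableWithinAt
  have hT_deriv : HasDerivAt T ((R ^ 2 - ‖z - c‖ ^ 2) / R ^ 2 : ℝ) 0 :=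
    (hasDerivAt_diskShift_zero hR.ne' (z - c)).const_add c
  have hf_deriv : HasDerivAt f (deriv f z) (T 0) := by
    rw [hT_zero]
    exact (hf.differentiableAt (isOpen_ball.mem_nhds hz)).hasDerivAt
  have schwarz : ‖deriv (f ∘ T) 0‖ ≤ r / R :=
    Complex.norm_deriv_le_div_of_mapsTo_ball (hf.comp hT_diff hT_maps)
      (by simpa only [Function.comp_apply, hT_zero] using hmaps.comp hT_maps) hR
  rw [(hf_deriv.scomp 0 hT_deriv).deriv, norm_smul, Complex.norm_real,
    Real.norm_of_nonneg (div_nonneg (sub_pos.2 hsq).le (sq_nonneg R)), div_mul_eq_mul_div,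
    div_le_div_iff₀ (by positivity) hR] at schwarz
  refine le_of_mul_le_mul_right ?_ hR
  linarith

lemma norm_deriv_mul_le_two_mul_re_of_re_pos {f : ℂ → ℂ} (hf : DifferentiableOn ℂ f (ball c R))
    (hre : ∀ ζ ∈ ball c R, 0 < (f ζ).re) (hz : z ∈ ball c R) :
    ‖deriv f z‖ * (R ^ 2 - ‖z - c‖ ^ 2) ≤ 2 * R * (f z).re := by
  have hpos : 0 < (f z).re := hre z hz
  have hdiff : DifferentiableOn ℂ (cayleyTransform (f z) ∘ f) (ball c R) := fun ζ hζ ↦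
    (differentiableAt_cayleyTransform hpos (hre ζ hζ)).comp_differentiableWithinAt ζ (hf ζ hζ)
  have hmaps : MapsTo (cayleyTransform (f z) ∘ f) (ball c R)
      (closedBall ((cayleyTransform (f z) ∘ f) z) 1) := fun ζ hζ ↦ by
    simpa [cayleyTransform_self] using (norm_cayleyTransform_lt_one hpos (hre ζ hζ)).le
  have hderiv : HasDerivAt (cayleyTransform (f z) ∘ f) (((2 * (f z).re)⁻¹ : ℝ) * deriv f z) z :=
    (hasDerivAt_cayleyTransform_self hpos.ne').comp z
      (hf.differentiableAt (isOpen_ball.mem_nhds hz)).hasDerivAt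
  have hpick := norm_deriv_mul_le_of_mapsTo_closedBall hdiff hz hmaps
  rw [hderiv.deriv, norm_mul, Complex.norm_real, Real.norm_of_nonneg (by positivity), mul_one,
    mul_assoc, inv_mul_le_iff₀ (by positivity)] at hpick
  linarith

lemma norm_deriv_mul_le_two_mul_cos_re_of_cos_re_pos {f : ℂ → ℂ}
    (hf : DifferentiableOn ℂ f (ball c R)) (hcos : ∀ ζ ∈ ball c R, 0 < Real.cos (f ζ).re)
    (hz : z ∈ ball c R) :
    ‖deriv f z‖ * (R ^ 2 - ‖z - c‖ ^ 2) ≤ 2 * R * Real.cos (f z).re := by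
  let g : ℂ → ℂ := fun ζ ↦ Complex.exp (Complex.I * f ζ)
  have hg_re (ζ : ℂ) : (g ζ).re = Real.exp (-(f ζ).im) * Real.cos (f ζ).re := by
    simp [g, Complex.exp_re]
  have hg_deriv : HasDerivAt g (g z * (Complex.I * deriv f z)) z :=
    ((hf.differentiableAt (isOpen_ball.mem_nhds hz)).hasDerivAt.const_mul Complex.I).cexp
  have hg_norm : ‖deriv g z‖ = Real.exp (-(f z).im) * ‖deriv f z‖ := by
    simp [hg_deriv.deriv, g, Complex.norm_exp]
  have hpick : ‖deriv g z‖ * (R ^ 2 - ‖z - c‖ ^ 2) ≤ 2 * R * (g z).re :=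
    norm_deriv_mul_le_two_mul_re_of_re_pos (hf.const_mul Complex.I).cexp
      (fun ζ hζ ↦ hg_re ζ ▸ mul_pos (Real.exp_pos _) (hcos ζ hζ)) hz
  rw [hg_norm, hg_re] at hpick
  refine le_of_mul_le_mul_left ?_ (Real.exp_pos (-(f z).im))
  linarith

end SchwarzPick

lemma cos_pi_div_mul_sub_midpoint_pos {α β t : ℝ} (ht : t ∈ Ioo α β) :
    0 < Real.cos (Real.pi / (β - α) * (t - (α + β) / 2)) := by
  have hlen : 0 < β - α := sub_pos.2 (ht.1.trans ht.2)
  have hπ : 0 < Real.pi := Real.pi_pos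
  rw [div_mul_eq_mul_div]
  refine Real.cos_pos_of_mem_Ioo ⟨(lt_div_iff₀ hlen).2 ?_, (div_lt_iff₀ hlen).2 ?_⟩
  · nlinarith [mul_pos hπ (sub_pos.2 ht.1)]
  · nlinarith [mul_pos hπ (sub_pos.2 ht.2)]

lemma norm_deriv_mul_le_of_re_mem_Ioo {α β R : ℝ} {c z : ℂ} {F : ℂ → ℂ}
    (hF : DifferentiableOn ℂ F (ball c R)) (hre : ∀ ζ ∈ ball c R, (F ζ).re ∈ Ioo α β)
    (hz : z ∈ ball c R) :
    ‖deriv F z‖ * (R ^ 2 - ‖z - c‖ ^ 2) ≤ 2 * (β - α) / Real.pi *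
      (R * Real.cos (Real.pi / (β - α) * ((F z).re - (α + β) / 2))) := by
  have hlen : 0 < β - α := sub_pos.2 ((hre z hz).1.trans (hre z hz).2)
  have hscale : 0 < Real.pi / (β - α) := div_pos Real.pi_pos hlen
  let f : ℂ → ℂ := fun ζ ↦ (Real.pi / (β - α) : ℝ) * (F ζ - ((α + β) / 2 : ℝ))
  have hf_re (ζ : ℂ) : (f ζ).re = Real.pi / (β - α) * ((F ζ).re - (α + β) / 2) := by
    simp only [f, Complex.re_ofReal_mul, Complex.sub_re, Complex.ofReal_re]
  have hf_norm : ‖deriv f z‖ = Real.pi / (β - α) * ‖deriv F z‖ := by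
    have hFz : DifferentiableAt ℂ F z := hF.differentiableAt (isOpen_ball.mem_nhds hz)
    rw [((hFz.hasDerivAt.sub_const _).const_mul _).deriv, norm_mul, Complex.norm_real,
      Real.norm_of_nonneg hscale.le]
  have hpick : ‖deriv f z‖ * (R ^ 2 - ‖z - c‖ ^ 2) ≤ 2 * R * Real.cos (f z).re :=
    norm_deriv_mul_le_two_mul_cos_re_of_cos_re_pos ((hF.sub_const _).const_mul _)
      (fun ζ hζ ↦ hf_re ζ ▸ cos_pi_div_mul_sub_midpoint_pos (hre ζ hζ)) hz
  rw [hf_norm, hf_re, mul_assoc, ← le_div_iff₀' hscale] at hpick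
  refine hpick.trans_eq ?_
  field_simp

lemma norm_fderiv_re_le_norm_deriv {F : ℂ → ℂ} {z : ℂ} (hF : DifferentiableAt ℂ F z) :
    ‖fderiv ℝ (fun ζ ↦ (F ζ).re) z‖ ≤ ‖deriv F z‖ := by
  have hre : HasFDerivAt (fun ζ ↦ (F ζ).re)
      (Complex.reCLM.comp ((fderiv ℂ F z).restrictScalars ℝ)) z :=
    Complex.reCLM.hasFDerivAt.comp z (hF.hasFDerivAt.restrictScalars ℝ)
  rw [hre.fderiv, norm_deriv_eq_norm_fderiv]
  simpa using Complex.reCLM.opNorm_comp_le ((fderiv ℂ F z).restrictScalars ℝ)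

lemma IsHarmonicOn.harmonicOnNhd {u : ℂ → ℝ} {G : Set ℂ} (hu : IsHarmonicOn u G)
    (hG : IsOpen G) : InnerProductSpace.HarmonicOnNhd u G := fun z hz ↦ by
  refine ⟨hu.1.contDiffAt (hG.mem_nhds hz), ?_⟩
  filter_upwards [hG.mem_nhds hz] with ζ hζ
  rw [InnerProductSpace.laplacian_eq_iteratedFDeriv_complexPlane]
  exact hu.2 ζ hζ

theorem stmt_14_general {α β R : ℝ} {u : ℂ → ℝ} {c z : ℂ} (hu : IsHarmonicOn u (ball c R))
    (hrange : ∀ ζ ∈ ball c R, u ζ ∈ Ioo α β) (hz : z ∈ ball c R) :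
    ‖fderiv ℝ u z‖ ≤ 2 * (β - α) / Real.pi *
      (R * Real.cos (Real.pi / (β - α) * (u z - (α + β) / 2)) / (R ^ 2 - ‖z - c‖ ^ 2)) := by
  obtain ⟨F, hF, hFu⟩ := (hu.harmonicOnNhd isOpen_ball).exists_analyticOnNhd_ball_re_eq
  have hFu_nhds : (fun ζ ↦ (F ζ).re) =ᶠ[nhds z] u :=
    hFu.eventuallyEq_of_mem (isOpen_ball.mem_nhds hz)
  have hgrad : ‖fderiv ℝ u z‖ ≤ ‖deriv F z‖ := by
    rw [← hFu_nhds.fderiv_eq]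
    exact norm_fderiv_re_le_norm_deriv (hF z hz).differentiableAt
  have hstrip := norm_deriv_mul_le_of_re_mem_Ioo hF.differentiableOn
    (fun ζ hζ ↦ (hFu hζ).symm ▸ hrange ζ hζ) hz
  have hsq : ‖z - c‖ ^ 2 < R ^ 2 := by
    gcongr
    exact mem_ball_iff_norm.1 hz
  rw [show (F z).re = u z from hFu hz, ← le_div_iff₀ (sub_pos.2 hsq), mul_div_assoc] at hstrip
  exact hgrad.trans hstrip

/-- Chen-type gradient estimate: if `u : 𝔹² → (α, β)` is a real-valued harmonic function on
the unit disk, then for every `z ∈ 𝔹²`,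
`|∇u(z)| ≤ (2(β-α)/π) · cos((π/(β-α))(u(z)-(α+β)/2))/(1-|z|²)`. -/
theorem stmt_14 (α β : ℝ) (hαβ : α < β) (u : ℂ → ℝ)
    (hu : IsHarmonicOn u (ball (0 : ℂ) 1))
    (hrange : ∀ z ∈ ball (0 : ℂ) 1, u z ∈ Ioo α β)
    (z : ℂ) (hz : z ∈ ball (0 : ℂ) 1) :
    ‖fderiv ℝ u z‖ ≤ 2 * (β - α) / Real.pi *
      (Real.cos (Real.pi / (β - α) * (u z - (α + β) / 2)) / (1 - ‖z‖ ^ 2)) := by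
  simpa only [one_mul, one_pow, sub_zero] using stmt_14_general hu hrange hz
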